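/- Fix an integer δ > 2. Let G be a 2-connected finite simple graph satisfying (♠)_δ in which the weight of every edge equals δ−1. Then the (δ−1)-ears of G are exactly the complements of the inclusion-maximal proper 2-connected induced subgraphs of G: the set of inner vertices of every (δ−1)-ear is the complement of the vertex set of an inclusion-maximal proper 2-connected induced subgraph, and every inclusion-maximal proper 2-connected induced subgraph of G arises this way from some (δ−1)-ear. -/

import Mathlib

/-!
Let all weights be `δ - 1` and put `f(A) = δ(|A| - 1) - (δ - 1)|E(A)|` (`excess`). Condition
`(♠)_δ` says `f(V) = 0` and `f(S) = 1` for good flats `S`. Since `δ > 2`, no edge may have weight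
`1`, so `G` is minimally `2`-connected. A set `A` is a good flat as soon as `G[A]` is `2`-connected
and `G[V \ A]` is connected (`isGoodFlat_of_compl`), and removing the inner vertices of an ear with
`n` edges changes `f` by `n - δ` (`excess_ear`).

Maximal sets are complements of ears: attach to a maximal `T` a path with nonempty interior outside
`T`. By maximality `T` and the path cover all vertices, and by minimal `2`-connectivity they carry
all edges (`exists_ear_of_maximal`). So `T` is a good flat, and `0 = f(V) = f(T) + n - δ` with
`f(T) = 1` forces `n = δ - 1` (`ear_of_maximal`).

Ears are complements of maximal sets: if `S` is the complement of the interior of a `(δ - 1)`-ear,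
then `f(S) = 1`. If `G[S]` were not `2`-connected, splitting it repeatedly along cut vertices would
write `f(S)` as a sum over at least two good flats, each contributing `1`, because every piece
still has a connected complement (splitting a disconnected piece even adds `δ`); hence `f(S) ≥ 2`,
a contradiction (`excess_trichotomy`). Finally a maximal proper set containing `S` is the
complement of an ear of the same length, so it is `S`.
-/

open SimpleGraph
open scoped Pointwise

namespace Gor

/-! ### Graph-theoretic notions -/

/-- A graph is `2`-connected if it is connected and remains connected after deletion of any
single vertex.  A single edge `K₂` counts as `2`-connected. -/
def IsTwoConnected {V : Type*} (G : SimpleGraph V) : Prop :=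
  G.Connected ∧ ∀ v : V, (G.induce {u : V | u ≠ v}).Connected

/-- `E(S)`: the set of edges of `G` with both endpoints in `S`. -/
def edgesIn {V : Type*} (G : SimpleGraph V) (S : Set V) : Set (Sym2 V) :=
  {e ∈ G.edgeSet | ∀ v ∈ e, v ∈ S}

/-- The simple graph obtained from `G` by contracting all edges in `F`: its vertices are the
connected components of the graph with edge set `F`, two being adjacent if some edge of `G`
joins them. -/
def contractEdges {V : Type*} (G : SimpleGraph V) (F : Set (Sym2 V)) :
    SimpleGraph (SimpleGraph.fromEdgeSet F).ConnectedComponent :=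
  SimpleGraph.fromRel fun c d => ∃ u v : V, G.Adj u v ∧
    (SimpleGraph.fromEdgeSet F).connectedComponentMk u = c ∧
    (SimpleGraph.fromEdgeSet F).connectedComponentMk v = d

/-- `S` is a good flat of `G`: the induced subgraph `G[S]` is `2`-connected and the contraction
of all edges of `E(S)` in `G` is `2`-connected. -/
def IsGoodFlat {V : Type*} (G : SimpleGraph V) (S : Set V) : Prop :=
  IsTwoConnected (G.induce S) ∧ IsTwoConnected (contractEdges G (edgesIn G S))

/-- The weight function `w : E → {1, δ-1}` with `w e = 1` whenever `G∖e` is `2`-connected and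
`w e = δ - 1` whenever `G/e` is `2`-connected. -/
def IsCanonicalWeight {V : Type*} (G : SimpleGraph V) (δ : ℕ) (w : Sym2 V → ℕ) : Prop :=
  (∀ e ∈ G.edgeSet, w e = 1 ∨ w e = δ - 1) ∧
  (∀ e ∈ G.edgeSet, IsTwoConnected (G.deleteEdges {e}) → w e = 1) ∧
  (∀ e ∈ G.edgeSet, IsTwoConnected (contractEdges G {e}) → w e = δ - 1)

/-- A `2`-connected graph `G` satisfies `(♠)_δ` via the weight function `w`. -/
def SatisfiesSpade {V : Type*} (G : SimpleGraph V) (δ : ℕ) (w : Sym2 V → ℕ) : Prop :=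
  IsTwoConnected G ∧ IsCanonicalWeight G δ w ∧
  (∑ᶠ e ∈ G.edgeSet, w e) = δ * (Nat.card V - 1) ∧
  ∀ S : Set V, IsGoodFlat G S → (∑ᶠ e ∈ edgesIn G S, w e) + 1 = δ * (S.ncard - 1)

/-- The number of `2`-connected components (blocks) of a graph: the number of inclusion-maximal
vertex subsets inducing a `2`-connected subgraph. -/
noncomputable def numBlocks {V : Type*} (G : SimpleGraph V) : ℕ :=
  {S : Set V | IsTwoConnected (G.induce S) ∧
    ∀ T : Set V, S ⊆ T → IsTwoConnected (G.induce T) → S = T}.ncard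

/-! ### Lattice polytopes and the Gorenstein property -/

/-- A point of `ℝ^η` is a lattice point if all its coordinates are integers. -/
def IsLatticePoint {η : Type*} (x : η → ℝ) : Prop := ∀ i, ∃ z : ℤ, x i = z

/-- The cone over a polytope `P ⊆ ℝ^η`, living in `ℝ^η × ℝ`. -/
def coneOver {η : Type*} (P : Set (η → ℝ)) : Set ((η → ℝ) × ℝ) :=
  {y | ∃ t : ℝ, ∃ p ∈ P, 0 ≤ t ∧ y = (t • p, t)}

/-- The lattice affinely spanned by the lattice points of `P`, placed at height one;
i.e. the subgroup of `ℝ^η × ℝ` generated by `{(p, 1) : p a lattice point of P}`. -/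
def coneLattice {η : Type*} (P : Set (η → ℝ)) : Submodule ℤ ((η → ℝ) × ℝ) :=
  Submodule.span ℤ {y | ∃ p ∈ P, IsLatticePoint p ∧ y = (p, 1)}

/-- `h` is a linear form cutting out a facet-supporting hyperplane of the cone over `P`:
it is nonnegative on the cone and vanishes on a subset of the cone spanning one dimension less
than the cone itself. -/
def IsFacetForm {η : Type*} (P : Set (η → ℝ)) (h : ((η → ℝ) × ℝ) →ₗ[ℝ] ℝ) : Prop :=
  (∀ y ∈ coneOver P, 0 ≤ h y) ∧
  Module.finrank ℝ (Submodule.span ℝ {y ∈ coneOver P | h y = 0}) + 1 =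
    Module.finrank ℝ (Submodule.span ℝ (coneOver P))

/-- `h` is reduced with respect to the lattice spanned by `P`: it takes integer values on the
lattice and attains the value `1` there. -/
def IsReducedForm {η : Type*} (P : Set (η → ℝ)) (h : ((η → ℝ) × ℝ) →ₗ[ℝ] ℝ) : Prop :=
  (∀ y ∈ coneLattice P, ∃ z : ℤ, h y = z) ∧ ∃ y ∈ coneLattice P, h y = 1

/-- A polytope `P`, regarded as full-dimensional in the affine lattice it spans, is
`δ`-Gorenstein if there is a lattice point `v ∈ δP` with `h (v, δ) = 1` for the reduced
equation `h` of every facet-supporting hyperplane of the cone over `P`. -/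
def IsDeltaGorenstein {η : Type*} (P : Set (η → ℝ)) (δ : ℕ) : Prop :=
  ∃ v : η → ℝ, v ∈ (δ : ℝ) • P ∧ (v, (δ : ℝ)) ∈ coneLattice P ∧
    ∀ h : ((η → ℝ) × ℝ) →ₗ[ℝ] ℝ, IsFacetForm P h → IsReducedForm P h → h (v, (δ : ℝ)) = 1

/-- A polytope is Gorenstein if it is `δ`-Gorenstein for some positive integer `δ`. -/
def IsGorenstein {η : Type*} (P : Set (η → ℝ)) : Prop :=
  ∃ δ : ℕ, 0 < δ ∧ IsDeltaGorenstein P δ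

/-! ### Graphic matroids of simple graphs and their polytopes -/

/-- An independent set of the graphic matroid of `G`: a set of edges forming a forest. -/
def IsGraphicIndep {V : Type*} (G : SimpleGraph V) (I : Set (Sym2 V)) : Prop :=
  I ⊆ G.edgeSet ∧ (SimpleGraph.fromEdgeSet I).IsAcyclic

/-- A basis of the graphic matroid of `G`: a maximal forest (spanning forest). -/
def IsGraphicBasis {V : Type*} (G : SimpleGraph V) (B : Set (Sym2 V)) : Prop :=
  IsGraphicIndep G B ∧ ∀ e ∈ G.edgeSet, e ∉ B → ¬ IsGraphicIndep G (insert e B)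

/-- The base polytope `B(M(G))` of the graphic matroid of `G`: the convex hull of the
indicator vectors of the bases. -/
def basePolytope {V : Type*} (G : SimpleGraph V) : Set (Sym2 V → ℝ) :=
  convexHull ℝ {x | ∃ B : Set (Sym2 V), IsGraphicBasis G B ∧
    x = B.indicator fun _ => (1 : ℝ)}

/-- The base polytope `B(M(G))`, regarded inside `ℝ^E` where `E` is the edge set of `G`. -/
def basePolytopeE {V : Type*} (G : SimpleGraph V) : Set (↥G.edgeSet → ℝ) :=
  convexHull ℝ {x | ∃ B : Set (Sym2 V), IsGraphicBasis G B ∧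
    x = (Subtype.val ⁻¹' B).indicator fun _ => (1 : ℝ)}

/-- A homogeneous inequality `g x ≥ 0` is valid for `P` and defines a facet (a supporting
hyperplane whose intersection with `P` has affine dimension one less than `P`). -/
def IsSupportingFaceIneq {α : Type*} (P : Set (α → ℝ)) (g : (α → ℝ) → ℝ) : Prop :=
  (∀ x ∈ P, 0 ≤ g x) ∧
  Module.finrank ℝ (vectorSpan ℝ {x ∈ P | g x = 0}) + 1 =
    Module.finrank ℝ (vectorSpan ℝ P)

/-! ### Multigraphs -/

/-- A finite undirected loopless multigraph on a vertex type `V` with edge type `E`. -/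
structure Multigraph (V E : Type*) where
  ends : E → Sym2 V
  loopless : ∀ e, ¬ (ends e).IsDiag

/-- The underlying simple graph of a multigraph. -/
def Multigraph.toSimple {V E : Type*} (G : Multigraph V E) : SimpleGraph V :=
  SimpleGraph.fromEdgeSet (Set.range G.ends)

/-- `E(S)` for a multigraph: the set of edges with both endpoints in `S`. -/
def Multigraph.edgesIn {V E : Type*} (G : Multigraph V E) (S : Set V) : Set E :=
  {e | ∀ v ∈ G.ends e, v ∈ S}

/-- A set of edges of a multigraph is a forest (an independent set of the graphic matroid):
no two parallel edges and no cycle. -/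
def IsMultiForest {V E : Type*} (G : Multigraph V E) (I : Set E) : Prop :=
  Set.InjOn G.ends I ∧ (SimpleGraph.fromEdgeSet (G.ends '' I)).IsAcyclic

/-- The independence polytope `P(M(G))` of the graphic matroid of a multigraph `G`. -/
def multiIndepPolytope {V E : Type*} (G : Multigraph V E) : Set (E → ℝ) :=
  convexHull ℝ {x | ∃ I : Set E, IsMultiForest G I ∧ x = I.indicator fun _ => (1 : ℝ)}

/-- The rank of a set of edges in the graphic matroid of a multigraph. -/
noncomputable def mrank {V E : Type*} (G : Multigraph V E) (A : Set E) : ℕ :=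
  sSup {n | ∃ I ⊆ A, IsMultiForest G I ∧ I.ncard = n}

/-- A flat of the graphic matroid of a multigraph: adding any further edge increases the rank. -/
def IsGraphicFlat {V E : Type*} (G : Multigraph V E) (A : Set E) : Prop :=
  ∀ e : E, e ∉ A → mrank G (insert e A) ≠ mrank G A

/-- A circuit of the graphic matroid of a multigraph: a minimal dependent set of edges. -/
def IsMultiCircuit {V E : Type*} (G : Multigraph V E) (C : Set E) : Prop :=
  ¬ IsMultiForest G C ∧ ∀ C' ⊂ C, IsMultiForest G C'

/-- The restriction of the graphic matroid of `G` to `A` is a connected matroid: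
`A` is nonempty and any two distinct elements of `A` lie on a common circuit inside `A`. -/
def ConnectedRestriction {V E : Type*} (G : Multigraph V E) (A : Set E) : Prop :=
  A.Nonempty ∧ ∀ e ∈ A, ∀ f ∈ A, e ≠ f → ∃ C ⊆ A, IsMultiCircuit G C ∧ e ∈ C ∧ f ∈ C

/-- `G` is the `m`-blow-up of the simple graph `H`: every edge of `H` is replaced by exactly
`m` parallel edges and there are no other edges. -/
def IsBlowUp {V E : Type*} (G : Multigraph V E) (m : ℕ) (H : SimpleGraph V) : Prop :=
  (∀ p ∈ H.edgeSet, {e : E | G.ends e = p}.ncard = m) ∧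
  ∀ p : Sym2 V, p ∉ H.edgeSet → {e : E | G.ends e = p} = ∅

/-- The condition `(♣)_δ`: `(δ-1)|E(S)| + 1 = δ(|S|-1)` for every vertex subset `S` inducing a
`2`-connected subgraph. -/
def ClubCond {V : Type*} (H : SimpleGraph V) (δ : ℕ) : Prop :=
  ∀ S : Set V, IsTwoConnected (H.induce S) →
    (δ - 1) * (edgesIn H S).ncard + 1 = δ * (S.ncard - 1)

/-! ### Chordality, `K₄` minors, cycle attachments -/

/-- A chordless cycle: a cycle such that every edge of `G` between vertices of the cycle is an
edge of the cycle. -/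
def IsChordlessCycle {V : Type*} (G : SimpleGraph V) {v : V} (c : G.Walk v v) : Prop :=
  c.IsCycle ∧ ∀ e ∈ edgesIn G {u : V | u ∈ c.support}, e ∈ c.edges

/-- `G` is `δ`-chordal: every cycle without a chord has exactly `δ + 1` edges. -/
def IsDeltaChordal {V : Type*} (G : SimpleGraph V) (δ : ℕ) : Prop :=
  ∀ (v : V) (c : G.Walk v v), IsChordlessCycle G c → c.length = δ + 1

/-- `G` has a `K₄` minor: there are four disjoint nonempty connected branch sets pairwise
joined by an edge. -/
def HasK4Minor {V : Type*} (G : SimpleGraph V) : Prop :=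
  ∃ B : Fin 4 → Set V, (∀ i, (B i).Nonempty) ∧ (∀ i, (G.induce (B i)).Connected) ∧
    (Pairwise fun i j => Disjoint (B i) (B j)) ∧
    (Pairwise fun i j => ∃ u ∈ B i, ∃ v ∈ B j, G.Adj u v)

/-- One step of attaching a new `(δ+1)`-cycle to an edge: `B` is obtained from `A` by adding
`δ - 1` new vertices forming a path of length `δ` between the endpoints of an edge of
`H[A]`, these being all new edges. -/
def AttachStep {V : Type*} (H : SimpleGraph V) (δ : ℕ) (A B : Set V) : Prop :=
  ∃ q : Fin (δ + 1) → V, Function.Injective q ∧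
    H.Adj (q 0) (q (Fin.last δ)) ∧ q 0 ∈ A ∧ q (Fin.last δ) ∈ A ∧
    (∀ i : Fin (δ + 1), i ≠ 0 → i ≠ Fin.last δ → q i ∉ A) ∧
    B = A ∪ {x | ∃ i : Fin (δ + 1), i ≠ 0 ∧ i ≠ Fin.last δ ∧ q i = x} ∧
    edgesIn H B = edgesIn H A ∪ {e | ∃ i : Fin δ, e = s(q i.castSucc, q i.succ)}

/-- `H` can be constructed from the clique `K₂` by repeatedly attaching new `(δ+1)`-cycles to
edges of the preceding graph. -/
def ConstructibleFromK2 {V : Type*} (H : SimpleGraph V) (δ : ℕ) : Prop :=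
  ∃ (k : ℕ) (S : Fin (k + 1) → Set V),
    (∃ u v : V, H.Adj u v ∧ S 0 = {u, v}) ∧
    S (Fin.last k) = Set.univ ∧
    ∀ i : Fin k, AttachStep H δ (S i.castSucc) (S i.succ)

/-! ### Gluings, subdivisions, collisions, ears -/

/-- `G` (with distinguished edge `ab`) is the gluing of the graphs `Gs i` along the edges
`es i`: the disjoint union with all the edges `es i` identified to the single edge `ab`. -/
def IsGluing {ι : Type*} {Vf : ι → Type*} {W : Type*} (Gs : ∀ i, SimpleGraph (Vf i))
    (es : ∀ i, Sym2 (Vf i)) (G : SimpleGraph W) (a b : W) : Prop :=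
  a ≠ b ∧ G.Adj a b ∧
  ∃ φ : ∀ i, Vf i → W,
    (∀ i, Function.Injective (φ i)) ∧
    (∀ x : W, ∃ i, x ∈ Set.range (φ i)) ∧
    (∀ i, Sym2.map (φ i) (es i) = s(a, b)) ∧
    (∀ i j, i ≠ j → Set.range (φ i) ∩ Set.range (φ j) = {a, b}) ∧
    ∀ x y : W, G.Adj x y ↔ ∃ i, ∃ u v, (Gs i).Adj u v ∧ φ i u = x ∧ φ i v = y

/-- `G'` together with the path `q` is the subdivision of `G` obtained by replacing the edge
`uv` by a path of `m` edges `q 0, …, q m` through new vertices. -/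
def IsSubdivisionAt {V W : Type*} (G : SimpleGraph V) (u v : V) {m : ℕ}
    (G' : SimpleGraph W) (q : Fin (m + 1) → W) : Prop :=
  ∃ φ : V → W, Function.Injective φ ∧ Function.Injective q ∧
    q 0 = φ u ∧ q (Fin.last m) = φ v ∧
    (∀ i : Fin (m + 1), i ≠ 0 → i ≠ Fin.last m → q i ∉ Set.range φ) ∧
    (∀ x : W, x ∈ Set.range φ ∨ x ∈ Set.range q) ∧
    ∀ x y : W, G'.Adj x y ↔
      ((∃ a b : V, G.Adj a b ∧ s(a, b) ≠ s(u, v) ∧ φ a = x ∧ φ b = y) ∨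
       ∃ i : Fin m, s(x, y) = s(q i.castSucc, q i.succ))

/-- `G` (with the distinguished nonadjacent pair `a b`) is the collision of `G₁` and `G₂` on
the edges `e₁, e₂`: the disjoint union with `e₁` and `e₂` identified and then deleted. -/
def IsCollision {V₁ V₂ W : Type*} (G₁ : SimpleGraph V₁) (G₂ : SimpleGraph V₂)
    (e₁ : Sym2 V₁) (e₂ : Sym2 V₂) (G : SimpleGraph W) (a b : W) : Prop :=
  a ≠ b ∧ ¬ G.Adj a b ∧
  ∃ (φ₁ : V₁ → W) (φ₂ : V₂ → W),
    Function.Injective φ₁ ∧ Function.Injective φ₂ ∧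
    Sym2.map φ₁ e₁ = s(a, b) ∧ Sym2.map φ₂ e₂ = s(a, b) ∧
    (∀ x : W, x ∈ Set.range φ₁ ∨ x ∈ Set.range φ₂) ∧
    Set.range φ₁ ∩ Set.range φ₂ = {a, b} ∧
    ∀ x y : W, G.Adj x y ↔
      ((∃ u v, G₁.Adj u v ∧ s(u, v) ≠ e₁ ∧ φ₁ u = x ∧ φ₁ v = y) ∨
       (∃ u v, G₂.Adj u v ∧ s(u, v) ≠ e₂ ∧ φ₂ u = x ∧ φ₂ v = y))

/-- The inner vertices of an ear. -/
def earInner {V : Type*} {s : ℕ} (p : Fin (s + 1) → V) : Set V :=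
  {x | ∃ i : Fin (s + 1), i ≠ 0 ∧ i ≠ Fin.last s ∧ p i = x}

/-- The edges of an ear. -/
def earEdges {V : Type*} {s : ℕ} (p : Fin (s + 1) → V) : Set (Sym2 V) :=
  {e | ∃ i : Fin s, e = s(p i.castSucc, p i.succ)}

/-- An `s`-ear of `G`: a path with `s` edges whose inner vertices have degree `2` in `G`. -/
def IsEar {V : Type*} (G : SimpleGraph V) {s : ℕ} (p : Fin (s + 1) → V) : Prop :=
  Function.Injective p ∧ (∀ i : Fin s, G.Adj (p i.castSucc) (p i.succ)) ∧
  ∀ i : Fin (s + 1), i ≠ 0 → i ≠ Fin.last s → (G.neighborSet (p i)).ncard = 2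

/-- `T` is the vertex set of an inclusion-maximal proper `2`-connected induced subgraph. -/
def IsMaxProperTwoConnected {V : Type*} (G : SimpleGraph V) (T : Set V) : Prop :=
  IsTwoConnected (G.induce T) ∧ T ≠ Set.univ ∧
  ∀ T' : Set V, T ⊆ T' → T' ≠ Set.univ → IsTwoConnected (G.induce T') → T' = T

/-! ### `(♠)₂` and `3`-connectivity -/

/-- A `2`-connected graph satisfies the equalities `(♠)₂`:
`|E| = 2(|V|-1)` and `|E(S)| = 2|S| - 3` for every good flat `S`. -/
def Spade2 {V : Type*} (G : SimpleGraph V) : Prop :=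
  IsTwoConnected G ∧ G.edgeSet.ncard = 2 * (Nat.card V - 1) ∧
  ∀ S : Set V, IsGoodFlat G S → (edgesIn G S).ncard = 2 * S.ncard - 3

/-- A graph is `3`-connected if it has more than `3` vertices and remains connected after
deletion of any two vertices. -/
def IsThreeConnected {V : Type*} (G : SimpleGraph V) : Prop :=
  3 < Nat.card V ∧ ∀ u v : V, (G.induce {x : V | x ≠ u ∧ x ≠ v}).Connected

/-! ### Inductive constructions -/

/-- Graphs obtainable from the `δ`-cycle by gluings (Proposition `construction1`) and
`(δ-1)`-subdivisions (Proposition `construction2`). -/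
inductive Obtainable (δ : ℕ) : {W : Type} → SimpleGraph W → Prop
  | cycle {W : Type} (G : SimpleGraph W) (e : G ≃g SimpleGraph.cycleGraph δ) :
      Obtainable δ G
  | glue {Vf : Fin (δ - 1) → Type} {W : Type}
      (Gs : ∀ i, SimpleGraph (Vf i)) (ws : ∀ i, Sym2 (Vf i) → ℕ) (es : ∀ i, Sym2 (Vf i))
      (G : SimpleGraph W) (a b : W)
      (hob : ∀ i, Obtainable δ (Gs i))
      (hsp : ∀ i, SatisfiesSpade (Gs i) δ (ws i))
      (hes : ∀ i, es i ∈ (Gs i).edgeSet)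
      (hwe : ∀ i, ws i (es i) = δ - 1)
      (hgl : IsGluing Gs es G a b) : Obtainable δ G
  | subdivide {V W : Type} (G : SimpleGraph V) (w : Sym2 V → ℕ) (u v : V)
      (G' : SimpleGraph W) (q : Fin (δ - 1 + 1) → W)
      (hob : Obtainable δ G) (hsp : SatisfiesSpade G δ w)
      (huv : G.Adj u v) (hw1 : w s(u, v) = 1)
      (hsub : IsSubdivisionAt G u v G' q) : Obtainable δ G'

/-- Graphs obtainable from the clique `K₄` by a finite sequence of collisions. -/
inductive ObtainableK4 : {W : Type} → SimpleGraph W → Prop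
  | k4 {W : Type} (G : SimpleGraph W) (e : G ≃g (⊤ : SimpleGraph (Fin 4))) :
      ObtainableK4 G
  | collide {V₁ V₂ W : Type} (G₁ : SimpleGraph V₁) (G₂ : SimpleGraph V₂)
      (e₁ : Sym2 V₁) (e₂ : Sym2 V₂) (G : SimpleGraph W) (a b : W)
      (h₁ : ObtainableK4 G₁) (h₂ : ObtainableK4 G₂)
      (he₁ : e₁ ∈ G₁.edgeSet) (he₂ : e₂ ∈ G₂.edgeSet)
      (hc : IsCollision G₁ G₂ e₁ e₂ G a b) : ObtainableK4 G

/-! ### Connectivity as the absence of proper closed vertex sets -/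

/-- `G[A]` is connected, expressed inside `V`: `A` is nonempty, and a nonempty subset of `A` that
is closed under adjacency within `A` is all of `A`. -/
def ConnOn {V : Type*} (G : SimpleGraph V) (A : Set V) : Prop :=
  A.Nonempty ∧ ∀ X ⊆ A, X.Nonempty → (∀ x ∈ X, ∀ y ∈ A, G.Adj x y → y ∈ X) → A ⊆ X

/-- `G[A]` is `2`-connected, expressed inside `V`. -/
def TwoConnOn {V : Type*} (G : SimpleGraph V) (A : Set V) : Prop :=
  ConnOn G A ∧ ∀ v ∈ A, ConnOn G (A \ {v})

lemma connected_iff_closed {W : Type*} (H : SimpleGraph W) :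
    H.Connected ↔ Nonempty W ∧ ∀ X : Set W, X.Nonempty →
      (∀ x ∈ X, ∀ y, H.Adj x y → y ∈ X) → ∀ y, y ∈ X := by
  constructor
  · intro h
    refine ⟨h.nonempty, fun X ⟨x, hx⟩ hc y => ?_⟩
    obtain ⟨q⟩ := h.preconnected x y
    induction q with
    | nil => exact hx
    | cons hadj _ ih => exact ih (hc _ hx _ hadj)
  · rintro ⟨hn, h⟩
    refine { preconnected := fun x y => ?_, nonempty := hn }
    exact h {y | H.Reachable x y} ⟨x, Reachable.refl x⟩
      (fun u hu v huv => Reachable.trans hu huv.reachable) y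

lemma connected_induce_iff {V : Type*} (G : SimpleGraph V) (A : Set V) :
    (G.induce A).Connected ↔ ConnOn G A := by
  rw [connected_iff_closed]
  constructor
  · rintro ⟨⟨a⟩, h⟩
    refine ⟨⟨a, a.2⟩, fun X hXA ⟨x, hx⟩ hc y hy => ?_⟩
    exact h {z | (z : V) ∈ X} ⟨⟨x, hXA hx⟩, hx⟩ (fun u hu v huv => hc u hu v v.2 huv) ⟨y, hy⟩
  · rintro ⟨⟨a, ha⟩, h⟩
    refine ⟨⟨⟨a, ha⟩⟩, fun X ⟨x, hx⟩ hc y => ?_⟩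
    have := h (Subtype.val '' X) (by rintro _ ⟨z, _, rfl⟩; exact z.2) ⟨x, x, hx, rfl⟩
      (by
        rintro _ ⟨z, hz, rfl⟩ v hv hzv
        exact ⟨⟨v, hv⟩, hc z hz ⟨v, hv⟩ hzv, rfl⟩) y.2
    obtain ⟨z, hz, hzy⟩ := this
    rwa [← Subtype.ext hzy]

lemma connected_induce_induce_iff {V : Type*} (G : SimpleGraph V) (A : Set V) (v : A) :
    ((G.induce A).induce {u : A | u ≠ v}).Connected ↔ ConnOn G (A \ {(v : V)}) := by
  rw [← connected_induce_iff]
  refine Iso.connected_iff (RelIso.mk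
    { toFun := fun u => ⟨u.1.1, u.1.2, fun h => u.2 (Subtype.ext h)⟩
      invFun := fun u => ⟨⟨u.1, u.2.1⟩, fun h => u.2.2 (congrArg Subtype.val h)⟩
      left_inv := fun u => rfl
      right_inv := fun u => rfl } Iff.rfl)

lemma isTwoConnected_induce_iff {V : Type*} (G : SimpleGraph V) (A : Set V) :
    IsTwoConnected (G.induce A) ↔ TwoConnOn G A := by
  unfold IsTwoConnected TwoConnOn
  rw [connected_induce_iff]
  simp only [connected_induce_induce_iff, Subtype.forall]

lemma isTwoConnected_iff {V : Type*} (G : SimpleGraph V) :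
    IsTwoConnected G ↔ TwoConnOn G Set.univ := by
  unfold IsTwoConnected TwoConnOn
  rw [← connected_induce_iff, (induceUnivIso G).connected_iff]
  have : ∀ v : V, {u : V | u ≠ v} = Set.univ \ {v} := fun v => by ext; simp
  simp only [this, connected_induce_iff, Set.mem_univ, forall_true_left]

/-- To prove `G[A]` connected it suffices that every nonempty closed subset of `A` meets a
fixed connected `B ⊆ A`: otherwise a closed set and its complement would both contain `B`. -/
lemma ConnOn.of_hit {V : Type*} {G : SimpleGraph V} {A B : Set V} (hBA : B ⊆ A)
    (hB : ConnOn G B)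
    (hit : ∀ X ⊆ A, X.Nonempty → (∀ x ∈ X, ∀ y ∈ A, G.Adj x y → y ∈ X) → (X ∩ B).Nonempty) :
    ConnOn G A := by
  have key : ∀ X ⊆ A, X.Nonempty → (∀ x ∈ X, ∀ y ∈ A, G.Adj x y → y ∈ X) → B ⊆ X :=
    fun X hXA hX hc => (hB.2 (X ∩ B) Set.inter_subset_right (hit X hXA hX hc)
      (fun x hx y hy hxy => ⟨hc x hx.1 y (hBA hy) hxy, hy⟩)).trans Set.inter_subset_left
  refine ⟨hB.1.mono hBA, fun X hXA hX hc y hy => ?_⟩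
  by_contra hyX
  have h2 := key (A \ X) Set.sdiff_subset ⟨y, hy, hyX⟩
    (fun x hx z hz hxz => ⟨hz, fun hzX => hx.2 (hc z hzX x hx.1 hxz.symm)⟩)
  obtain ⟨b, hb⟩ := hB.1
  exact (h2 hb).2 (key X hXA hX hc hb)

lemma TwoConnOn.diff {V : Type*} {G : SimpleGraph V} {A : Set V} (h : TwoConnOn G A) (v : V) :
    ConnOn G (A \ {v}) := by
  by_cases hv : v ∈ A
  · exact h.2 v hv
  · rw [Set.sdiff_singleton_eq_self hv]
    exact h.1

/-- Deleting at most one vertex from a `2`-connected graph leaves it connected. -/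
lemma TwoConnOn.compl_subsingleton {V : Type*} {G : SimpleGraph V} (h : TwoConnOn G Set.univ)
    {W : Set V} (hW : W.Subsingleton) : ConnOn G Wᶜ := by
  rcases hW.eq_empty_or_singleton with rfl | ⟨v, rfl⟩
  · rw [Set.compl_empty]; exact h.1
  · rw [Set.compl_eq_univ_sdiff]; exact h.2 v trivial

lemma TwoConnOn.exists_ne {V : Type*} {G : SimpleGraph V} {A : Set V} (h : TwoConnOn G A) (v : V) :
    ∃ u ∈ A, u ≠ v :=
  (h.diff v).1

lemma TwoConnOn.two_le_ncard {V : Type*} [Finite V] {G : SimpleGraph V} {A : Set V}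
    (h : TwoConnOn G A) : 2 ≤ A.ncard := by
  obtain ⟨a, ha⟩ := h.1.1
  obtain ⟨b, hb, hab⟩ := h.exists_ne a
  exact (Set.one_lt_ncard (Set.toFinite _)).2 ⟨a, ha, b, hb, hab.symm⟩

/-! ### Good flats -/

/-- Contracting a connected `G[A]` creates one vertex for `A`, and keeps every other vertex. -/
lemma mk_eq_iff {V : Type*} {G : SimpleGraph V} {A : Set V} (hA : ConnOn G A) (u v : V) :
    (fromEdgeSet (edgesIn G A)).connectedComponentMk u =
      (fromEdgeSet (edgesIn G A)).connectedComponentMk v ↔ u = v ∨ (u ∈ A ∧ v ∈ A) := by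
  have hadj : ∀ x y, (fromEdgeSet (edgesIn G A)).Adj x y ↔ G.Adj x y ∧ x ∈ A ∧ y ∈ A := by
    intro x y
    rw [fromEdgeSet_adj]
    simp only [edgesIn, Set.mem_ofPred_eq, mem_edgeSet, Sym2.mem_iff, forall_eq_or_imp, forall_eq]
    exact ⟨fun h => h.1, fun h => ⟨h, h.1.ne⟩⟩
  rw [ConnectedComponent.eq]
  constructor
  · rintro ⟨q⟩
    induction q with
    | nil => exact Or.inl rfl
    | cons h _ ih =>
      rw [hadj] at h
      rcases ih with rfl | ih
      · exact Or.inr h.2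
      · exact Or.inr ⟨h.2.1, ih.2⟩
  · rintro (rfl | ⟨hu, hv⟩)
    · exact Reachable.refl _
    · exact (hA.2 {z ∈ A | (fromEdgeSet (edgesIn G A)).Reachable u z} (fun z hz => hz.1)
        ⟨u, hu, Reachable.refl _⟩
        (fun x hx y hy hxy => ⟨hy, hx.2.trans ((hadj x y).2 ⟨hxy, hx.1, hy⟩).reachable⟩) hv).2

/-- The vertex classes of `G / E(A)` are `A` and singletons, so deleting a vertex of `G / E(A)`
amounts to deleting `A` or a single vertex from `G`. -/
lemma isGoodFlat_of_compl {V : Type*} {G : SimpleGraph V} (hG : TwoConnOn G Set.univ) {A : Set V}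
    (hA : TwoConnOn G A) (hAc : ConnOn G Aᶜ) : IsGoodFlat G A := by
  refine ⟨(isTwoConnected_induce_iff G A).2 hA, ?_⟩
  have hne : Nonempty V := hG.1.1.to_type
  constructor
  · rw [connected_iff_closed]
    refine ⟨hne.map (fromEdgeSet (edgesIn G A)).connectedComponentMk, fun X ⟨x, hx⟩ hc y => ?_⟩
    induction x using ConnectedComponent.ind with | _ x => ?_
    induction y using ConnectedComponent.ind with | _ y => ?_
    refine hG.1.2 {v | (fromEdgeSet (edgesIn G A)).connectedComponentMk v ∈ X}
      (Set.subset_univ _) ⟨x, hx⟩ (fun u hu v _ huv => ?_) (Set.mem_univ y)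
    by_cases h : (fromEdgeSet (edgesIn G A)).connectedComponentMk u =
      (fromEdgeSet (edgesIn G A)).connectedComponentMk v
    · rw [Set.mem_ofPred_eq] at hu ⊢
      exact h ▸ hu
    · exact hc _ hu _ ((fromRel_adj _ _ _).2 ⟨h, Or.inl ⟨u, v, huv, rfl, rfl⟩⟩)
  · intro c
    induction c using ConnectedComponent.ind with | _ r => ?_
    rw [connected_induce_iff]
    have hZ : ConnOn G {v | (fromEdgeSet (edgesIn G A)).connectedComponentMk v ≠
        (fromEdgeSet (edgesIn G A)).connectedComponentMk r} := by
      by_cases hr : r ∈ A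
      · convert hAc using 1
        ext v
        simp only [ne_eq, mk_eq_iff hA.1, Set.mem_ofPred_eq, Set.mem_compl_iff]
        constructor
        · intro h hv
          exact h (Or.inr ⟨hv, hr⟩)
        · rintro h (rfl | h')
          · exact h hr
          · exact h h'.1
      · convert hG.diff r using 1
        ext v
        simp [mk_eq_iff hA.1, hr]
    refine ⟨?_, fun X hXA ⟨x, hx⟩ hc y hy => ?_⟩
    · obtain ⟨z, hz⟩ := hZ.1
      exact ⟨_, hz⟩
    · induction x using ConnectedComponent.ind with | _ x => ?_
      induction y using ConnectedComponent.ind with | _ y => ?_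
      refine hZ.2 {v | (fromEdgeSet (edgesIn G A)).connectedComponentMk v ∈ X}
        (fun v hv => hXA hv) ⟨x, hx⟩ (fun u hu v hv huv => ?_) hy
      by_cases h : (fromEdgeSet (edgesIn G A)).connectedComponentMk u =
        (fromEdgeSet (edgesIn G A)).connectedComponentMk v
      · rw [Set.mem_ofPred_eq] at hu ⊢
        exact h ▸ hu
      · exact hc _ hu _ hv ((fromRel_adj _ _ _).2 ⟨h, Or.inl ⟨u, v, huv, rfl, rfl⟩⟩)

/-! ### The excess of a vertex set -/

/-- The deviation `δ(|A| - 1) - (δ - 1)|E(A)|`. With all weights `δ - 1`, condition `(♠)_δ` says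
that it is `0` on the whole vertex set and `1` on every good flat. -/
noncomputable def excess {V : Type*} (δ : ℤ) (G : SimpleGraph V) (A : Set V) : ℤ :=
  δ * (A.ncard - 1) - (δ - 1) * (edgesIn G A).ncard

lemma mk_mem_edgesIn {V : Type*} {G : SimpleGraph V} {A : Set V} {x y : V} :
    s(x, y) ∈ edgesIn G A ↔ G.Adj x y ∧ x ∈ A ∧ y ∈ A := by
  simp [edgesIn]

/-- If `G[A]` is not connected after removing some `W ⊆ A`, then `A` splits into two parts
overlapping in `W`, with no edge between them outside `W`. -/
lemma exists_separation {V : Type*} {G : SimpleGraph V} {A W : Set V} (hWA : W ⊆ A)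
    (hne : (A \ W).Nonempty) (hA : ¬ ConnOn G (A \ W)) :
    ∃ A₁ A₂ : Set V, A₁ ∪ A₂ = A ∧ A₁ ∩ A₂ = W ∧ (A₁ \ A₂).Nonempty ∧ (A₂ \ A₁).Nonempty ∧
      ∀ x ∈ A₁ \ A₂, ∀ y ∈ A₂ \ A₁, ¬ G.Adj x y := by
  simp only [ConnOn, not_and, not_forall] at hA
  obtain ⟨X, hXA, ⟨x, hx⟩, hc, hAX⟩ := hA hne
  obtain ⟨y, hy, hyX⟩ := Set.not_subset.1 hAX
  refine ⟨X ∪ W, A \ X, ?_, ?_, ⟨x, ?_⟩, ⟨y, ?_⟩, ?_⟩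
  · ext z
    have := @hXA z
    have := @hWA z
    simp only [Set.mem_union, Set.mem_sdiff] at *
    tauto
  · ext z
    have := @hXA z
    have := @hWA z
    simp only [Set.mem_union, Set.mem_inter_iff, Set.mem_sdiff] at *
    tauto
  · exact ⟨Or.inl hx, fun h => h.2 hx⟩
  · exact ⟨⟨hy.1, hyX⟩, fun h => h.elim hyX hy.2⟩
  · rintro u ⟨hu, hu'⟩ v ⟨hv, hv'⟩ huv
    have huX : u ∈ X := by
      by_contra h
      exact hu' ⟨hu.elim (fun h' => (h h').elim) (fun h' => hWA h'), h⟩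
    exact hv' (Or.inl (hc u huX v ⟨hv.1, fun h => hv' (Or.inr h)⟩ huv))

/-- Passing to one side of a separation of order at most one keeps the complement connected: a
component of `G - A₁` inside `A₂` would be cut off from the rest of `G` by `A₁ ∩ A₂`. -/
lemma connOn_compl_of_separation {V : Type*} {G : SimpleGraph V} (hG : TwoConnOn G Set.univ)
    {A₁ A₂ : Set V} (hc : ConnOn G (A₁ ∪ A₂)ᶜ) (hW : (A₁ ∩ A₂).Subsingleton)
    (hno : ∀ x ∈ A₁ \ A₂, ∀ y ∈ A₂ \ A₁, ¬ G.Adj x y) : ConnOn G A₁ᶜ := by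
  refine ConnOn.of_hit (Set.compl_subset_compl.2 Set.subset_union_left) hc
    fun X hX hXne hcl => ?_
  by_contra hempty
  have hX2 : ∀ x ∈ X, x ∈ A₂ := by
    intro x hx
    by_contra h
    exact hempty ⟨x, hx, fun h' => h'.elim (hX hx) h⟩
  have := (hG.compl_subsingleton hW).2 X (fun x hx h => hX hx h.1) hXne (by
    intro x hx y hy hxy
    refine hcl x hx y (fun hy1 => ?_) hxy
    exact hno y ⟨hy1, fun hy2 => hy ⟨hy1, hy2⟩⟩ x ⟨hX2 x hx, hX hx⟩ hxy.symm)
  obtain ⟨z, hz⟩ := hc.1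
  exact hz (Or.inr (hX2 z (this fun h => hz (Or.inl h.1))))

lemma excess_union {V : Type*} [Finite V] {G : SimpleGraph V} (δ : ℤ)
    {A₁ A₂ : Set V} (hW : (A₁ ∩ A₂).Subsingleton)
    (hno : ∀ x ∈ A₁ \ A₂, ∀ y ∈ A₂ \ A₁, ¬ G.Adj x y) :
    excess δ G (A₁ ∪ A₂) =
      excess δ G A₁ + excess δ G A₂ + δ * (1 - (A₁ ∩ A₂).ncard) := by
  have hE : edgesIn G (A₁ ∪ A₂) = edgesIn G A₁ ∪ edgesIn G A₂ := by
    ext e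
    induction e using Sym2.ind with | _ x y => ?_
    have h1 := fun hx hy => hno x hx y hy
    have h2 := fun hy hx => hno y hy x hx
    simp only [Set.mem_union, mk_mem_edgesIn, Set.mem_sdiff] at *
    constructor
    · rintro ⟨hxy, hx, hy⟩
      have := hxy.symm
      tauto
    · tauto
  have hd : Disjoint (edgesIn G A₁) (edgesIn G A₂) := by
    rw [Set.disjoint_left]
    intro e
    induction e using Sym2.ind with | _ x y => ?_
    simp only [mk_mem_edgesIn]
    rintro ⟨hxy, hx, hy⟩ ⟨-, hx', hy'⟩
    exact hxy.ne (hW ⟨hx, hx'⟩ ⟨hy, hy'⟩)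
  have h1 := Set.ncard_union_eq hd (Set.toFinite _) (Set.toFinite _)
  have h2 := Set.ncard_union_add_ncard_inter A₁ A₂ (Set.toFinite _) (Set.toFinite _)
  unfold excess
  rw [hE, h1]
  zify at h2
  push_cast
  linear_combination δ * h2

/-- If `V \ A` induces a connected graph, then splitting `A` along separations of order at most
one ends in single vertices and good flats. The excess adds up along a cut vertex and gains `δ`
along a disconnection, so it equals `1` only if `G[A]` is itself `2`-connected. -/
lemma excess_trichotomy {V : Type*} [Finite V] {G : SimpleGraph V} {δ : ℤ} (hδ : 2 ≤ δ)
    (hG : TwoConnOn G Set.univ) (hgood : ∀ S, IsGoodFlat G S → excess δ G S = 1)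
    (A : Set V) (hne : A.Nonempty) (hc : ConnOn G Aᶜ) :
    (A.ncard = 1 ∧ excess δ G A = 0) ∨ (TwoConnOn G A ∧ excess δ G A = 1) ∨
      2 ≤ excess δ G A := by
  induction hn : A.ncard using Nat.strong_induction_on generalizing A with
  | _ n ih =>
  subst hn
  by_cases h2 : TwoConnOn G A
  · exact Or.inr (Or.inl ⟨h2, hgood A (isGoodFlat_of_compl hG h2 hc)⟩)
  by_cases h1 : A.ncard = 1
  · refine Or.inl ⟨h1, ?_⟩
    obtain ⟨a, rfl⟩ := Set.ncard_eq_one.1 h1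
    have : edgesIn G {a} = ∅ := by
      ext e
      induction e using Sym2.ind with | _ x y => ?_
      simp only [mk_mem_edgesIn, Set.mem_singleton_iff, Set.mem_empty_iff_false, iff_false]
      rintro ⟨h, rfl, rfl⟩
      exact G.irrefl h
    simp [excess, this]
  refine Or.inr (Or.inr ?_)
  have hpos : 0 < A.ncard := (Set.ncard_pos (Set.toFinite _)).2 hne
  obtain ⟨W, hWs, hWA, hWne, hWc⟩ : ∃ W : Set V, W.Subsingleton ∧ W ⊆ A ∧ (A \ W).Nonempty ∧
      ¬ ConnOn G (A \ W) := by
    by_cases h : ConnOn G A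
    · simp only [TwoConnOn, h, true_and, not_forall] at h2
      obtain ⟨v, hv, hvc⟩ := h2
      refine ⟨{v}, Set.subsingleton_singleton, Set.singleton_subset_iff.2 hv, ?_, hvc⟩
      obtain ⟨b, hb, hbv⟩ := Set.exists_ne_of_one_lt_ncard (s := A) (by omega) v
      exact ⟨b, hb, hbv⟩
    · exact ⟨∅, Set.subsingleton_empty, Set.empty_subset _, by simpa using hne, by simpa using h⟩
  obtain ⟨A₁, A₂, rfl, rfl, hd1, hd2, hno⟩ := exists_separation hWA hWne hWc
  have hno' : ∀ x ∈ A₂ \ A₁, ∀ y ∈ A₁ \ A₂, ¬ G.Adj x y := fun x hx y hy h =>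
    hno y hy x hx h.symm
  have hlt1 : A₁.ncard < (A₁ ∪ A₂).ncard := by
    refine Set.ncard_lt_ncard ⟨Set.subset_union_left, fun h => ?_⟩ (Set.toFinite _)
    obtain ⟨z, hz⟩ := hd2
    exact hz.2 (h (Or.inr hz.1))
  have hlt2 : A₂.ncard < (A₁ ∪ A₂).ncard := by
    refine Set.ncard_lt_ncard ⟨Set.subset_union_right, fun h => ?_⟩ (Set.toFinite _)
    obtain ⟨z, hz⟩ := hd1
    exact hz.2 (h (Or.inl hz.1))
  have r1 := ih _ hlt1 A₁ (hd1.mono Set.sdiff_subset)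
    (connOn_compl_of_separation hG hc hWs hno) rfl
  have r2 := ih _ hlt2 A₂ (hd2.mono Set.sdiff_subset)
    (connOn_compl_of_separation hG (by rwa [Set.union_comm]) (by rwa [Set.inter_comm]) hno') rfl
  have hsum := excess_union δ hWs hno
  have c1 := Set.ncard_inter_add_ncard_sdiff_eq_ncard A₁ A₂ (Set.toFinite _)
  have c2 := Set.ncard_inter_add_ncard_sdiff_eq_ncard A₂ A₁ (Set.toFinite _)
  rw [Set.inter_comm] at c2
  have p1 := (Set.ncard_pos (Set.toFinite _)).2 hd1
  have p2 := (Set.ncard_pos (Set.toFinite _)).2 hd2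
  rcases hWs.eq_empty_or_singleton with h0 | ⟨v, h0⟩
  · rw [h0, Set.ncard_empty] at hsum
    push_cast at hsum
    rcases r1 with r1 | r1 | r1 <;> rcases r2 with r2 | r2 | r2 <;> linarith [r1, r2]
  · rw [h0, Set.ncard_singleton] at hsum c1 c2
    push_cast at hsum
    rcases r1 with r1 | r1 | r1
    · omega
    all_goals
      rcases r2 with r2 | r2 | r2
      · omega
      all_goals linarith [r1, r2]

/-! ### Paths and ears -/

/-- The restriction of `p` to `{0, …, n}` is a path with `n` edges. -/
def IsPathSeq {V : Type*} (G : SimpleGraph V) (p : ℕ → V) (n : ℕ) : Prop :=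
  Set.InjOn p (Set.Iic n) ∧ ∀ i < n, G.Adj (p i) (p (i + 1))

/-- The edges of the path `p 0, …, p n`. -/
def pathEdges {V : Type*} (p : ℕ → V) (n : ℕ) : Set (Sym2 V) :=
  (fun i => s(p i, p (i + 1))) '' Set.Iio n

lemma closed_up {V : Type*} {G : SimpleGraph V} {p : ℕ → V} {i j : ℕ} {A X : Set V}
    (hadj : ∀ k, i ≤ k → k < j → G.Adj (p k) (p (k + 1)))
    (hc : ∀ x ∈ X, ∀ y ∈ A, G.Adj x y → y ∈ X) (hA : ∀ k, i ≤ k → k ≤ j → p k ∈ A)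
    (hi : p i ∈ X) (hij : i ≤ j) : p j ∈ X := by
  induction j, hij using Nat.le_induction with
  | base => exact hi
  | succ j hij ih =>
    exact hc _ (ih (fun k h1 h2 => hadj k h1 (by omega)) (fun k h1 h2 => hA k h1 (by omega))) _
      (hA _ (by omega) le_rfl) (hadj j hij (by omega))

lemma closed_down {V : Type*} {G : SimpleGraph V} {p : ℕ → V} {i j : ℕ} {A X : Set V}
    (hadj : ∀ k, i ≤ k → k < j → G.Adj (p k) (p (k + 1)))
    (hc : ∀ x ∈ X, ∀ y ∈ A, G.Adj x y → y ∈ X) (hA : ∀ k, i ≤ k → k ≤ j → p k ∈ A)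
    (hj : p j ∈ X) (hij : i ≤ j) : p i ∈ X := by
  induction j, hij using Nat.le_induction with
  | base => exact hj
  | succ j hij ih =>
    exact ih (fun k h1 h2 => hadj k h1 (by omega)) (fun k h1 h2 => hA k h1 (by omega))
      (hc _ hj _ (hA _ hij (by omega)) (hadj j hij (by omega)).symm)

lemma IsPathSeq.connOn_interior {V : Type*} {G : SimpleGraph V} {p : ℕ → V} {n : ℕ}
    (hp : IsPathSeq G p n) (hn : 2 ≤ n) : ConnOn G (p '' Set.Ioo 0 n) := by
  refine ⟨⟨p 1, 1, ⟨by omega, by omega⟩, rfl⟩, ?_⟩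
  rintro X hX ⟨x, hx⟩ hc _ ⟨j, ⟨hj0, hjn⟩, rfl⟩
  obtain ⟨i, ⟨hi0, hin⟩, rfl⟩ := hX hx
  rcases le_total i j with h | h
  · exact closed_up (fun k _ _ => hp.2 k (by omega)) hc
      (fun k _ _ => ⟨k, ⟨by omega, by omega⟩, rfl⟩) hx h
  · exact closed_down (fun k _ _ => hp.2 k (by omega)) hc
      (fun k _ _ => ⟨k, ⟨by omega, by omega⟩, rfl⟩) hx h

/-- Attaching a path with both ends in `T` to a `2`-connected `G[T]` keeps it `2`-connected. -/
lemma TwoConnOn.attach {V : Type*} {G : SimpleGraph V} {T : Set V} (hT : TwoConnOn G T)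
    {p : ℕ → V} {n : ℕ} (hp : IsPathSeq G p n) (h0 : p 0 ∈ T) (hn : p n ∈ T) :
    TwoConnOn G (T ∪ p '' Set.Iic n) := by
  have key : ∀ W : Set V, W.Subsingleton → ConnOn G (T \ W) →
      ConnOn G ((T ∪ p '' Set.Iic n) \ W) := by
    intro W hW hTW
    refine ConnOn.of_hit (Set.sdiff_subset_sdiff_left Set.subset_union_left) hTW
      fun X hX hXne hc => ?_
    obtain ⟨x, hx⟩ := hXne
    obtain ⟨hxT | ⟨i, hi, rfl⟩, hxW⟩ := hX hx
    · exact ⟨x, hx, hxT, hxW⟩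
    have hi : i ≤ n := hi
    by_cases hlow : ∀ j ≤ i, p j ∉ W
    · exact ⟨p 0, closed_down (fun k _ _ => hp.2 k (by omega)) hc
        (fun k _ hk => ⟨Or.inr ⟨k, hk.trans hi, rfl⟩, hlow k hk⟩) hx (Nat.zero_le i),
        h0, hlow 0 (Nat.zero_le i)⟩
    · -- the deleted vertex is below `i`, hence the path from `i` up to `n` avoids it
      push Not at hlow
      obtain ⟨j, hji, hj⟩ := hlow
      have hup : ∀ k, i ≤ k → k ≤ n → p k ∉ W := by
        intro k hik hkn hk
        have : j = k := hp.1 (hji.trans hi) hkn (hW hj hk)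
        obtain rfl : j = i := by omega
        exact hxW hj
      exact ⟨p n, closed_up (fun k _ _ => hp.2 k (by omega)) hc
        (fun k h1 h2 => ⟨Or.inr ⟨k, h2, rfl⟩, hup k h1 h2⟩) hx hi, hn, hup n hi le_rfl⟩
  refine ⟨?_, fun v _ => key {v} Set.subsingleton_singleton (hT.diff v)⟩
  simpa using key ∅ Set.subsingleton_empty (by simpa using hT.1)

lemma IsPathSeq.ncard_pathEdges {V : Type*} {G : SimpleGraph V} {p : ℕ → V} {n : ℕ}
    (hp : IsPathSeq G p n) : (pathEdges p n).ncard = n := by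
  have hinj : Set.InjOn (fun i => s(p i, p (i + 1))) (Set.Iio n) := by
    intro i hi j hj hij
    have hi : i < n := hi
    have hj : j < n := hj
    rcases Sym2.eq_iff.1 hij with ⟨h, -⟩ | ⟨h1, h2⟩
    · exact hp.1 hi.le hj.le h
    · have a1 : i = j + 1 := hp.1 hi.le (Set.mem_Iic.2 hj) h1
      have a2 : i + 1 = j := hp.1 (Set.mem_Iic.2 hi) hj.le h2
      omega
  rw [pathEdges, hinj.ncard_image, ← Finset.coe_Iio, Set.ncard_coe_finset, Nat.card_Iio]

lemma IsPathSeq.ncard_interior {V : Type*} {G : SimpleGraph V} {p : ℕ → V} {n : ℕ}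
    (hp : IsPathSeq G p n) : (p '' Set.Ioo 0 n).ncard = n - 1 := by
  rw [(hp.1.mono fun i hi => hi.2.le).ncard_image, ← Finset.coe_Ioo, Set.ncard_coe_finset,
    Nat.card_Ioo]
  omega

/-- Removing the inner vertices of an ear with `n` edges changes the excess by `n - δ`. -/
lemma excess_ear {V : Type*} [Finite V] {G : SimpleGraph V} (δ : ℤ) {p : ℕ → V} {n : ℕ}
    (hp : IsPathSeq G p n) (hn : 2 ≤ n)
    (hE : ∀ e ∈ G.edgeSet, e ∈ edgesIn G (p '' Set.Ioo 0 n)ᶜ ∨ e ∈ pathEdges p n) :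
    excess δ G Set.univ = excess δ G (p '' Set.Ioo 0 n)ᶜ + n - δ := by
  have hU : edgesIn G Set.univ = edgesIn G (p '' Set.Ioo 0 n)ᶜ ∪ pathEdges p n := by
    ext e
    constructor
    · exact fun h => hE e h.1
    · rintro (h | ⟨i, hi, rfl⟩)
      · exact ⟨h.1, fun _ _ => trivial⟩
      · exact mk_mem_edgesIn.2 ⟨hp.2 i hi, trivial, trivial⟩
  have hd : Disjoint (edgesIn G (p '' Set.Ioo 0 n)ᶜ) (pathEdges p n) := by
    rw [Set.disjoint_right]
    rintro _ ⟨i, hi, rfl⟩ h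
    have hi : i < n := hi
    obtain ⟨-, h1, h2⟩ := mk_mem_edgesIn.1 h
    -- since `n ≥ 2`, one of the two ends of each edge of the path is an inner vertex
    by_cases h0 : i = 0
    · exact h2 ⟨i + 1, ⟨by omega, by omega⟩, rfl⟩
    · exact h1 ⟨i, ⟨by omega, hi⟩, rfl⟩
  have c1 := Set.ncard_union_eq hd (Set.toFinite _) (Set.toFinite _)
  have c2 := Set.ncard_add_ncard_compl (p '' Set.Ioo 0 n)
  rw [hp.ncard_pathEdges] at c1
  unfold excess
  rw [hU, c1, Set.ncard_univ, ← c2, hp.ncard_interior]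
  push_cast [show 1 ≤ n by omega]
  ring

/-- In a `2`-connected graph, any proper `2`-connected `G[T]` has a path attached to it at two
distinct vertices, with at least one inner vertex and all inner vertices outside `T`. -/
lemma exists_ear {V : Type*} {G : SimpleGraph V} (hG : TwoConnOn G Set.univ) {T : Set V}
    (hT : TwoConnOn G T) (hne : T ≠ Set.univ) :
    ∃ (p : ℕ → V) (n : ℕ), IsPathSeq G p n ∧ 2 ≤ n ∧ p 0 ∈ T ∧ p n ∈ T ∧
      ∀ i, 0 < i → i < n → p i ∉ T := by
  classical
  obtain ⟨a, ha, x, hx, hax⟩ : ∃ a ∈ T, ∃ x, x ∉ T ∧ G.Adj a x := by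
    by_contra! h
    exact hne (Set.univ_subset_iff.1 (hG.1.2 T (Set.subset_univ _) hT.1.1
      (fun a ha y _ hay => by_contra fun hy => h a ha y hy hay)))
  -- the component of `x` in `G - T` has a neighbour in `T` besides `a`, as `G - a` is connected
  obtain ⟨y, ⟨q, hq⟩, b, hb, hba, hyb⟩ : ∃ y, (∃ q : G.Walk x y, ∀ u ∈ q.support, u ∉ T) ∧
      ∃ b ∈ T, b ≠ a ∧ G.Adj y b := by
    by_contra! h
    have hall := (hG.diff a).2 {y | ∃ q : G.Walk x y, ∀ u ∈ q.support, u ∉ T}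
      (fun y ⟨q, hq⟩ => ⟨trivial, fun hya => hq y q.end_mem_support (by
        rw [Set.mem_singleton_iff.1 hya]; exact ha)⟩)
      ⟨x, Walk.nil, by simpa using hx⟩
      (by
        rintro y ⟨q, hq⟩ z ⟨-, hz⟩ hyz
        refine ⟨q.concat hyz, fun u hu => ?_⟩
        rw [Walk.support_concat, List.mem_append, List.mem_singleton] at hu
        rcases hu with hu | rfl
        · exact hq u hu
        · exact fun huT => h y ⟨q, hq⟩ u huT hz hyz)
    obtain ⟨b, hb, hba⟩ := hT.exists_ne a
    obtain ⟨q, hq⟩ := hall ⟨trivial, hba⟩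
    exact hq b q.end_mem_support hb
  have hq' : ∀ u ∈ q.bypass.support, u ∉ T :=
    fun u hu => hq u (q.support_bypass_subset_support hu)
  set r : G.Walk a b := Walk.cons hax (q.bypass.concat hyb) with hr
  have hsupp : ∀ u, u ∈ r.support → u ∈ T → u = a ∨ u = b := by
    intro u hu huT
    rw [hr, Walk.support_cons, Walk.support_concat, List.mem_cons, List.mem_append,
      List.mem_singleton] at hu
    rcases hu with hu | hu | hu
    · exact Or.inl hu
    · exact (hq' u hu huT).elim
    · exact Or.inr hu
  have hrp : r.IsPath := by
    rw [hr, Walk.cons_isPath_iff, Walk.concat_isPath_iff]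
    refine ⟨⟨q.bypass_isPath, fun h => hq' b h hb⟩, fun h => ?_⟩
    rw [Walk.support_concat, List.mem_append, List.mem_singleton] at h
    exact h.elim (fun h => hq' a h ha) (fun h => hba h.symm)
  have hlen : 2 ≤ r.length := by
    rw [hr, Walk.length_cons, Walk.length_concat]; omega
  have hinj : Set.InjOn r.getVert (Set.Iic r.length) := hrp.getVert_injOn
  refine ⟨r.getVert, r.length, ⟨hinj, fun i hi => r.adj_getVert_succ hi⟩, hlen, by simpa using ha,
    by simpa using hb, fun i hi0 hin hiT => ?_⟩
  rcases hsupp _ (r.getVert_mem_support i) hiT with h | h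
  · have : i = 0 := hinj hin.le (Nat.zero_le _) (by rw [h, Walk.getVert_zero])
    omega
  · have : i = r.length := hinj hin.le (Set.mem_Iic.2 le_rfl) (by rw [h, Walk.getVert_length])
    omega

/-! ### Ears and maximal proper `2`-connected induced subgraphs -/

/-- In a minimally `2`-connected graph, an ear attached to a maximal proper `2`-connected `G[T]`
exhausts `G`: its vertices by maximality, its edges because any further edge could be deleted. -/
lemma exists_ear_of_maximal {V : Type*} {G : SimpleGraph V} (hG : TwoConnOn G Set.univ)
    (hmin : ∀ e ∈ G.edgeSet, ¬ IsTwoConnected (G.deleteEdges {e})) {T : Set V}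
    (hT : IsMaxProperTwoConnected G T) :
    ∃ (p : ℕ → V) (n : ℕ), IsPathSeq G p n ∧ 2 ≤ n ∧ T = (p '' Set.Ioo 0 n)ᶜ ∧
      ∀ e ∈ G.edgeSet, e ∈ edgesIn G (p '' Set.Ioo 0 n)ᶜ ∨ e ∈ pathEdges p n := by
  obtain ⟨hT2, hTne, hTmax⟩ := hT
  rw [isTwoConnected_induce_iff] at hT2
  obtain ⟨p, n, hp, hn, h0, hpn, hout⟩ := exists_ear hG hT2 hTne
  have hcover : T ∪ p '' Set.Iic n = Set.univ := by
    by_contra h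
    have := hTmax _ Set.subset_union_left h
      ((isTwoConnected_induce_iff _ _).2 (hT2.attach hp h0 hpn))
    exact hout 1 (by omega) (by omega)
      (this ▸ Or.inr ⟨1, Set.mem_Iic.2 (by omega), rfl⟩)
  have hTeq : T = (p '' Set.Ioo 0 n)ᶜ := by
    ext z
    constructor
    · rintro hz ⟨i, hi, rfl⟩
      exact hout i hi.1 hi.2 hz
    · intro hz
      by_contra hzT
      obtain hz' | ⟨i, hi, rfl⟩ := hcover.symm ▸ Set.mem_univ z
      · exact hzT hz'
      have hi : i ≤ n := hi
      rcases Nat.eq_zero_or_pos i with rfl | hi0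
      · exact hzT h0
      rcases hi.eq_or_lt with rfl | hin
      · exact hzT hpn
      · exact hz ⟨i, ⟨hi0, hin⟩, rfl⟩
  refine ⟨p, n, hp, hn, hTeq, fun e he => ?_⟩
  rw [← hTeq]
  by_contra! hcon
  refine hmin e he ?_
  have hT' : TwoConnOn (G.deleteEdges {e}) T := by
    rw [← isTwoConnected_induce_iff] at hT2 ⊢
    convert hT2 using 1
    ext u v
    simp only [comap_adj, Function.Embedding.subtype_apply, deleteEdges_adj,
      Set.mem_singleton_iff, and_iff_left_iff_imp]
    rintro huv rfl
    exact hcon.1 (mk_mem_edgesIn.2 ⟨huv, u.2, v.2⟩)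
  have hp' : IsPathSeq (G.deleteEdges {e}) p n := by
    refine ⟨hp.1, fun i hi => ?_⟩
    rw [deleteEdges_adj]
    exact ⟨hp.2 i hi, fun h => hcon.2 ⟨i, hi, h⟩⟩
  rw [isTwoConnected_iff, ← hcover]
  exact hT'.attach hp' h0 hpn

lemma neighborSet_eq_of_pathEdges {V : Type*} {G : SimpleGraph V} {p : ℕ → V} {n : ℕ}
    (hp : IsPathSeq G p n)
    (hE : ∀ e ∈ G.edgeSet, e ∈ edgesIn G (p '' Set.Ioo 0 n)ᶜ ∨ e ∈ pathEdges p n)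
    {i : ℕ} (hi0 : 0 < i) (hin : i < n) : G.neighborSet (p i) = {p (i - 1), p (i + 1)} := by
  ext y
  simp only [mem_neighborSet, Set.mem_insert_iff, Set.mem_singleton_iff]
  constructor
  · intro h
    rcases hE s(p i, y) h with h' | ⟨j, hj, hji⟩
    · exact ((mk_mem_edgesIn.1 h').2.1 ⟨i, ⟨hi0, hin⟩, rfl⟩).elim
    have hj : j < n := hj
    rcases Sym2.eq_iff.1 hji with ⟨h1, h2⟩ | ⟨h1, h2⟩
    · obtain rfl : j = i := hp.1 hj.le hin.le h1
      exact Or.inr h2.symm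
    · obtain rfl : j + 1 = i := hp.1 (Set.mem_Iic.2 hj) hin.le h2
      exact Or.inl h1.symm
  · rintro (rfl | rfl)
    · have := hp.2 (i - 1) (by omega)
      rw [Nat.sub_add_cancel hi0] at this
      exact this.symm
    · exact hp.2 i hin

/-- Every edge of `G` at an inner vertex of an ear is an edge of the ear. -/
lemma edges_of_degree_two {V : Type*} [Finite V] {G : SimpleGraph V} {p : ℕ → V} {n : ℕ}
    (hp : IsPathSeq G p n) (hdeg : ∀ i, 0 < i → i < n → (G.neighborSet (p i)).ncard = 2) :
    ∀ e ∈ G.edgeSet, e ∈ edgesIn G (p '' Set.Ioo 0 n)ᶜ ∨ e ∈ pathEdges p n := by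
  have key : ∀ i, 0 < i → i < n → ∀ y, G.Adj (p i) y → s(p i, y) ∈ pathEdges p n := by
    intro i hi0 hin y hy
    have hprev : G.Adj (p (i - 1)) (p i) := by
      have := hp.2 (i - 1) (by omega)
      rwa [Nat.sub_add_cancel hi0] at this
    have hne : p (i - 1) ≠ p (i + 1) := by
      intro h
      have : i - 1 = i + 1 :=
        hp.1 (Set.mem_Iic.2 (by omega)) (Set.mem_Iic.2 (by omega)) h
      omega
    have heq : {p (i - 1), p (i + 1)} = G.neighborSet (p i) := by
      refine Set.eq_of_subset_of_ncard_le ?_ ?_ (Set.toFinite _)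
      · rintro z (rfl | rfl)
        · exact hprev.symm
        · exact hp.2 i hin
      · rw [hdeg i hi0 hin, Set.ncard_pair hne]
    have hy' : y ∈ G.neighborSet (p i) := hy
    rw [← heq] at hy'
    rcases hy' with rfl | rfl
    · refine ⟨i - 1, Set.mem_Iio.2 (by omega), ?_⟩
      simp only [Nat.sub_add_cancel hi0]
      exact Sym2.eq_swap
    · exact ⟨i, hin, rfl⟩
  intro e he
  induction e using Sym2.ind with | _ x y => ?_
  have he : G.Adj x y := he
  rw [or_iff_not_imp_right]
  refine fun hnot => mk_mem_edgesIn.2 ⟨he, ?_, ?_⟩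
  · rintro ⟨i, hi, rfl⟩
    exact hnot (key i hi.1 hi.2 y he)
  · rintro ⟨i, hi, rfl⟩
    rw [Sym2.eq_swap] at hnot
    exact hnot (key i hi.1 hi.2 x he.symm)

lemma exists_maximal {V : Type*} [Finite V] {G : SimpleGraph V} {S : Set V}
    (hS : IsTwoConnected (G.induce S)) (hne : S ≠ Set.univ) :
    ∃ T, S ⊆ T ∧ IsMaxProperTwoConnected G T := by
  obtain ⟨T, hST, hT⟩ := (Set.toFinite
    {T : Set V | IsTwoConnected (G.induce T) ∧ T ≠ Set.univ}).exists_le_maximal ⟨hS, hne⟩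
  exact ⟨T, hST, hT.prop.1, hT.prop.2, fun T' hTT' hne' hT' =>
    (hT.le_of_ge ⟨hT', hne'⟩ hTT').antisymm hTT'⟩

/-- A maximal proper `2`-connected `G[T]` is a good flat complementary to an ear, and comparing
its excess with that of `G` gives the length of the ear. -/
lemma ear_of_maximal {V : Type*} [Finite V] {G : SimpleGraph V} {δ : ℕ}
    (hG : TwoConnOn G Set.univ) (hU : excess δ G Set.univ = 0)
    (hgood : ∀ S, IsGoodFlat G S → excess δ G S = 1)
    (hmin : ∀ e ∈ G.edgeSet, ¬ IsTwoConnected (G.deleteEdges {e})) {T : Set V}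
    (hT : IsMaxProperTwoConnected G T) :
    ∃ p : ℕ → V, IsPathSeq G p (δ - 1) ∧ 2 ≤ δ - 1 ∧ T = (p '' Set.Ioo 0 (δ - 1))ᶜ ∧
      ∀ e ∈ G.edgeSet, e ∈ edgesIn G (p '' Set.Ioo 0 (δ - 1))ᶜ ∨ e ∈ pathEdges p (δ - 1) := by
  obtain ⟨p, n, hp, hn, hTeq, hE⟩ := exists_ear_of_maximal hG hmin hT
  have hTc : ConnOn G Tᶜ := by
    rw [hTeq, compl_compl]
    exact hp.connOn_interior hn
  have h1 := hgood T (isGoodFlat_of_compl hG ((isTwoConnected_induce_iff _ _).1 hT.1) hTc)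
  have h2 := excess_ear (δ : ℤ) hp hn hE
  rw [← hTeq] at h2
  obtain rfl : n = δ - 1 := by omega
  exact ⟨p, hp, hn, hTeq, hE⟩

lemma finsum_const_weight {V : Type*} [Finite V] {G : SimpleGraph V} {w : Sym2 V → ℕ} {c : ℕ}
    (hall : ∀ e ∈ G.edgeSet, w e = c) (S : Set V) :
    (∑ᶠ e ∈ edgesIn G S, w e) = (edgesIn G S).ncard * c := by
  rw [finsum_mem_congr rfl (fun e he => hall e he.1),
    finsum_mem_eq_finite_toFinset_sum _ (Set.toFinite _), Finset.sum_const,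
    ← Set.ncard_eq_toFinset_card, smul_eq_mul]

lemma edgesIn_univ {V : Type*} (G : SimpleGraph V) : edgesIn G Set.univ = G.edgeSet := by
  simp [edgesIn]

theorem stmt11 {δ m : ℕ} (hδ : 2 < δ) (hm : m = δ - 1)
    {V : Type*} [Fintype V] [DecidableEq V]
    (G : SimpleGraph V) (w : Sym2 V → ℕ) (hsp : SatisfiesSpade G δ w)
    (hall : ∀ e ∈ G.edgeSet, w e = δ - 1) :
    (∀ p : Fin (m + 1) → V, IsEar G p → IsMaxProperTwoConnected G (earInner p)ᶜ) ∧
    (∀ T : Set V, IsMaxProperTwoConnected G T →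
      ∃ p : Fin (m + 1) → V, IsEar G p ∧ earInner p = Tᶜ) := by
  obtain ⟨hG, ⟨-, hw1, -⟩, hsum, hflat⟩ := hsp
  rw [isTwoConnected_iff] at hG
  -- an edge whose deletion keeps `G` two-connected has weight `1`, and `δ - 1 ≠ 1`
  have hmin : ∀ e ∈ G.edgeSet, ¬ IsTwoConnected (G.deleteEdges {e}) := by
    intro e he h
    have h1 := hw1 e he h
    rw [hall e he] at h1
    omega
  have hU : excess δ G Set.univ = 0 := by
    rw [← edgesIn_univ, finsum_const_weight hall] at hsum
    have := hG.two_le_ncard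
    rw [Set.ncard_univ] at this
    zify [show 1 ≤ δ by omega, show 1 ≤ Nat.card V by omega] at hsum
    rw [excess, Set.ncard_univ]
    linear_combination -hsum
  have hgood : ∀ S, IsGoodFlat G S → excess δ G S = 1 := by
    intro S hS
    have h := hflat S hS
    rw [finsum_const_weight hall] at h
    have := ((isTwoConnected_induce_iff _ _).1 hS.1).two_le_ncard
    zify [show 1 ≤ δ by omega, show 1 ≤ S.ncard by omega] at h
    rw [excess]
    linear_combination -h
  have hm2 : 2 ≤ m := by omega
  constructor
  · intro p hp
    obtain ⟨hinj, hadj, hdeg⟩ := hp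
    -- the ear as a sequence indexed by `ℕ`; its values beyond `m` are irrelevant
    set q : ℕ → V := fun i => p ⟨min i m, by omega⟩ with hq
    have hqp : ∀ i (hi : i ≤ m), q i = p ⟨i, by omega⟩ := by
      intro i hi
      simp only [hq, min_eq_left hi]
    have hpath : IsPathSeq G q m := by
      refine ⟨fun i hi j hj hij => ?_, fun i hi => ?_⟩
      · rw [hqp i hi, hqp j hj] at hij
        simpa using hinj hij
      · rw [hqp i hi.le, hqp (i + 1) hi]
        exact hadj ⟨i, hi⟩
    have hinner : earInner p = q '' Set.Ioo 0 m := by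
      ext z
      constructor
      · rintro ⟨i, hi0, him, rfl⟩
        have h1 : (i : ℕ) ≠ 0 := fun h => hi0 (Fin.ext h)
        have h2 : (i : ℕ) ≠ m := fun h => him (Fin.ext h)
        exact ⟨i, ⟨by omega, by omega⟩, hqp i (by omega)⟩
      · rintro ⟨i, ⟨hi0, him⟩, rfl⟩
        refine ⟨⟨i, by omega⟩, fun h => ?_, fun h => ?_, (hqp i him.le).symm⟩
        · exact hi0.ne' (congrArg Fin.val h)
        · exact him.ne (congrArg Fin.val h)
    have hE := edges_of_degree_two hpath (fun i hi0 him => by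
      rw [hqp i him.le]
      exact hdeg _ (fun h => hi0.ne' (congrArg Fin.val h))
        (fun h => him.ne (congrArg Fin.val h)))
    have hex := excess_ear (δ : ℤ) hpath hm2 hE
    rw [hinner]
    have hS0 : q 0 ∈ (q '' Set.Ioo 0 m)ᶜ := by
      rintro ⟨i, hi, h⟩
      exact hi.1.ne' (hpath.1 hi.2.le (Nat.zero_le _) h)
    have hSm : q m ∈ (q '' Set.Ioo 0 m)ᶜ := by
      rintro ⟨i, hi, h⟩
      exact hi.2.ne (hpath.1 hi.2.le (Set.mem_Iic.2 le_rfl) h)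
    have h0m : q 0 ≠ q m := by
      intro h
      have : 0 = m := hpath.1 (Nat.zero_le _) (Set.mem_Iic.2 le_rfl) h
      omega
    have hS : TwoConnOn G (q '' Set.Ioo 0 m)ᶜ := by
      rcases excess_trichotomy (δ := (δ : ℤ)) (by omega) hG hgood _ ⟨_, hS0⟩
        (by rw [compl_compl]; exact hpath.connOn_interior hm2) with h | h | h
      · have := (Set.one_lt_ncard (Set.toFinite _)).2 ⟨_, hS0, _, hSm, h0m⟩
        omega
      · exact h.1
      · omega
    rw [← isTwoConnected_induce_iff] at hS
    have hSne : (q '' Set.Ioo 0 m)ᶜ ≠ Set.univ := by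
      intro h
      have h1 : q 1 ∈ (q '' Set.Ioo 0 m)ᶜ := h ▸ Set.mem_univ _
      exact h1 ⟨1, ⟨by omega, by omega⟩, rfl⟩
    -- a maximal set above the complement of the ear is the complement of an equally long ear
    obtain ⟨T, hST, hT⟩ := exists_maximal hS hSne
    obtain ⟨r, hr, -, hTr, -⟩ := ear_of_maximal hG hU hgood hmin hT
    rw [← hm] at hr hTr
    have hTS : (q '' Set.Ioo 0 m)ᶜ = T := by
      refine Set.eq_of_subset_of_ncard_le hST ?_ (Set.toFinite _)
      have c1 := Set.ncard_add_ncard_compl (q '' Set.Ioo 0 m)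
      have c2 := Set.ncard_add_ncard_compl (r '' Set.Ioo 0 m)
      rw [hpath.ncard_interior] at c1
      rw [hr.ncard_interior, ← hTr] at c2
      omega
    rwa [hTS]
  · intro T hT
    obtain ⟨p, hp, -, hTp, hE⟩ := ear_of_maximal hG hU hgood hmin hT
    rw [← hm] at hp hTp hE
    have hidx : ∀ i : Fin (m + 1), i ≠ 0 → i ≠ Fin.last m → 0 < (i : ℕ) ∧ (i : ℕ) < m := by
      intro i hi0 him
      have h1 : (i : ℕ) ≠ 0 := fun h => hi0 (Fin.ext h)
      have h2 : (i : ℕ) ≠ m := fun h => him (Fin.ext h)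
      omega
    refine ⟨fun i => p i, ⟨fun i j hij => ?_, fun i => ?_, fun i hi0 him => ?_⟩, ?_⟩
    · exact Fin.ext (hp.1 (Set.mem_Iic.2 (by omega)) (Set.mem_Iic.2 (by omega)) hij)
    · exact hp.2 i i.2
    · obtain ⟨h1, h2⟩ := hidx i hi0 him
      rw [neighborSet_eq_of_pathEdges hp hE h1 h2]
      refine Set.ncard_pair fun h => ?_
      have : (i : ℕ) - 1 = i + 1 :=
        hp.1 (Set.mem_Iic.2 (by omega)) (Set.mem_Iic.2 (by omega)) h
      omega
    · rw [hTp, compl_compl]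
      ext z
      constructor
      · rintro ⟨i, hi0, him, rfl⟩
        exact ⟨i, hidx i hi0 him, rfl⟩
      · rintro ⟨i, ⟨hi0, him⟩, rfl⟩
        exact ⟨⟨i, by omega⟩, fun h => hi0.ne' (congrArg Fin.val h),
          fun h => him.ne (congrArg Fin.val h), rfl⟩

end Gor
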